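/- Suppose (E₁, …, E_m) is a partition of ℤ² and h₁, …, h_m are nonzero elements of ℤ² such that E_i + h_i = E_i for all i. If no two of the h_i are proportional to each other (i.e., there are no i ≠ j and nonzero integers a, b with a·h_i = b·h_j), then each E_i is a periodic set. -/

import Mathlib

/-- Two elements `g, h ∈ ℤ²` are proportional if `a • g = b • h` for some nonzero
integers `a, b`. -/
def Proportional (g h : ℤ × ℤ) : Prop :=
  ∃ a b : ℤ, a ≠ 0 ∧ b ≠ 0 ∧ a • g = b • h

/-- A set `E ⊆ ℤ²` is periodic if `E + Λ = E` for some finite index subgroup `Λ ⊆ ℤ²`. -/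
def IsPeriodicSet (E : Set (ℤ × ℤ)) : Prop :=
  ∃ Λ : AddSubgroup (ℤ × ℤ), Λ.FiniteIndex ∧ ∀ h ∈ Λ, ∀ x : ℤ × ℤ, x + h ∈ E ↔ x ∈ E

def DD (u : ℤ × ℤ) (f : ℤ × ℤ → ℤ) : ℤ × ℤ → ℤ := fun x => f (x + u) - f x

theorem inv_zsmul (f : ℤ × ℤ → ℤ) (u : ℤ × ℤ) (hf : ∀ x, f (x + u) = f x) (n : ℤ) :
    ∀ x, f (x + n • u) = f x := by
  induction n using Int.induction_on with
  | zero => intro x; simp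
  | succ k ih =>
    intro x
    rw [add_smul, one_smul, ← add_assoc, hf, ih]
  | pred k ih =>
    intro x
    rw [← hf (x + _), sub_smul, one_smul]
    rw [show x + (-(k:ℤ) • u - u) + u = x + -(k:ℤ) • u by abel, ih]

theorem DD_inv (u h : ℤ × ℤ) (f : ℤ × ℤ → ℤ) (hf : ∀ x, f (x + h) = f x) :
    ∀ x, DD u f (x + h) = DD u f x := by
  intro x
  simp only [DD]
  rw [add_right_comm, hf, hf]

theorem DD_iter_zero (u : ℤ × ℤ) (n : ℕ) : (DD u)^[n] (fun _ => 0) = fun _ => 0 := by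
  induction n with
  | zero => rfl
  | succ n ih =>
    rw [Function.iterate_succ_apply]
    have : DD u (fun _ => 0) = fun _ => 0 := by funext x; simp [DD]
    rw [this, ih]

theorem kill {ι : Type*} [DecidableEq ι] (h0 w : ℤ × ℤ) (h : ι → ℤ × ℤ) (s : Finset ι) :
    (∀ j ∈ s, ∃ A B : ℤ, w = A • h j + B • h0) →
    ∀ (g : ℤ × ℤ → ℤ) (c : ℤ) (G : ι → ℤ × ℤ → ℤ),
    (∀ x, g (x + h0) = g x) → (∀ j ∈ s, ∀ x, G j (x + h j) = G j x) →
    (∀ x, g x = c + ∑ j ∈ s, G j x) → (DD w)^[s.card + 1] g = fun _ => 0 := by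
  induction s using Finset.induction_on with
  | empty =>
    intro _ g c G _ _ hg
    funext x
    simp [DD, hg]
  | insert j s hj ih =>
    intro hw g c G hg0 hG hg
    rw [Finset.card_insert_of_notMem hj, Function.iterate_succ_apply]
    obtain ⟨A, B, hAB⟩ := hw j (Finset.mem_insert_self _ _)
    refine ih (fun k hk => hw k (Finset.mem_insert_of_mem hk)) (DD w g) 0
      (fun k => DD (A • h j) (G k)) (DD_inv _ _ _ hg0)
      (fun k hk => DD_inv _ _ _ (hG k (Finset.mem_insert_of_mem hk))) ?_
    intro x
    have h1 : DD w g x = DD (A • h j) g x := by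
      simp only [DD]
      rw [hAB, ← add_assoc, inv_zsmul g h0 hg0]
    have h2 := inv_zsmul (G j) (h j) (hG j (Finset.mem_insert_self _ _)) A x
    rw [h1]
    simp only [DD, hg, Finset.sum_insert hj, h2, Finset.sum_sub_distrib]
    ring

theorem DD_bdd (w : ℤ × ℤ) (f : ℤ × ℤ → ℤ) (hb : ∃ C, ∀ x, |f x| ≤ C) (n : ℕ) :
    ∃ C, ∀ x, |(DD w)^[n] f x| ≤ C := by
  induction n with
  | zero => exact hb
  | succ n ih =>
    obtain ⟨C, hC⟩ := ih
    refine ⟨C + C, fun x => ?_⟩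
    rw [Function.iterate_succ_apply']
    exact (abs_sub _ _).trans (add_le_add (hC _) (hC _))

theorem two_step (w : ℤ × ℤ) (g : ℤ × ℤ → ℤ) (hb : ∃ C, ∀ x, |g x| ≤ C)
    (h2 : DD w (DD w g) = fun _ => 0) : DD w g = fun _ => 0 := by
  obtain ⟨C, hC⟩ := hb
  have hd : ∀ x, DD w g (x + w) = DD w g x := fun x => by
    have := congrFun h2 x
    simp only [DD] at this ⊢
    linarith
  funext x
  have key : ∀ n : ℕ, g (x + (n : ℤ) • w) = g x + n * DD w g x := by
    intro n
    induction n with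
    | zero => simp
    | succ n ih =>
      have h3 := inv_zsmul _ w hd n x
      simp only [DD] at h3 ih ⊢
      push_cast
      rw [add_smul, one_smul, ← add_assoc]
      linarith
  by_contra hne
  have hk := key (2 * C + 1).toNat
  have hC0 : 0 ≤ C := (abs_nonneg _).trans (hC x)
  have h1 := hC (x + ((2 * C + 1).toNat : ℤ) • w)
  rw [hk, Int.toNat_of_nonneg (by omega)] at h1
  have h4 := abs_le.1 h1
  have h5 := abs_le.1 (hC x)
  rcases lt_or_gt_of_ne hne with h | h
  · nlinarith
  · nlinarith

theorem DD_collapse (w : ℤ × ℤ) (f : ℤ × ℤ → ℤ) (hb : ∃ C, ∀ x, |f x| ≤ C) (n : ℕ)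
    (h : (DD w)^[n + 1] f = fun _ => 0) : DD w f = fun _ => 0 := by
  induction n with
  | zero => exact h
  | succ n ih =>
    apply ih
    rw [Function.iterate_succ_apply']
    apply two_step _ _ (DD_bdd w f hb n)
    rw [← Function.iterate_succ_apply' (DD w), ← Function.iterate_succ_apply' (DD w)]
    exact h

theorem fin_index (Λ : AddSubgroup (ℤ × ℤ)) (N : ℤ) (hN : N ≠ 0)
    (h1 : ((N, 0) : ℤ × ℤ) ∈ Λ) (h2 : ((0, N) : ℤ × ℤ) ∈ Λ) : Λ.FiniteIndex := by
  haveI : NeZero N.natAbs := ⟨by simpa using hN⟩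
  let φ : ℤ × ℤ →+ ZMod N.natAbs × ZMod N.natAbs :=
    (Int.castAddHom (ZMod N.natAbs)).prodMap (Int.castAddHom (ZMod N.natAbs))
  haveI : φ.ker.FiniteIndex := AddSubgroup.finiteIndex_ker φ
  refine AddSubgroup.finiteIndex_of_le (H := φ.ker) ?_
  rintro ⟨a, b⟩ hab
  have hab' : ((a : ZMod N.natAbs) = 0) ∧ ((b : ZMod N.natAbs) = 0) := by
    simpa [φ, AddMonoidHom.mem_ker] using hab
  rw [ZMod.intCast_zmod_eq_zero_iff_dvd, ZMod.intCast_zmod_eq_zero_iff_dvd,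
    Int.natAbs_dvd, Int.natAbs_dvd] at hab'
  obtain ⟨⟨k, rfl⟩, ⟨l, rfl⟩⟩ := hab'
  have := Λ.add_mem (Λ.zsmul_mem h1 k) (Λ.zsmul_mem h2 l)
  simpa [mul_comm] using this

theorem det_ne (g k : ℤ × ℤ) (hg : g ≠ 0) (hk : k ≠ 0) (hp : ¬ Proportional g k) :
    g.1 * k.2 - g.2 * k.1 ≠ 0 := by
  intro h0
  obtain ⟨p, q⟩ := g
  obtain ⟨a, b⟩ := k
  simp only at h0
  apply hp
  by_cases hp0 : p = 0
  · subst hp0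
    have hq : q ≠ 0 := by rintro rfl; exact hg rfl
    have ha : a = 0 := by simpa [hq] using h0
    subst ha
    have hb : b ≠ 0 := by rintro rfl; exact hk rfl
    exact ⟨b, q, hb, hq, by simp [mul_comm]⟩
  · have ha : a ≠ 0 := by
      rintro rfl
      have hb : b = 0 := by simpa [hp0] using h0
      subst hb; exact hk rfl
    refine ⟨a, p, ha, hp0, ?_⟩
    ext
    · simp [mul_comm]
    · simp; linarith

/-- If `(E₁, …, E_m)` is a partition of `ℤ²` and `h₁, …, h_m` are nonzero elements of
`ℤ²` with `E_i + h_i = E_i` for all `i`, and no two of the `h_i` are proportional to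
each other, then each `E_i` is a periodic set. -/
theorem periodic_of_partition_invariants (m : ℕ)
    (E : Fin m → Set (ℤ × ℤ)) (h : Fin m → ℤ × ℤ)
    (hdisj : ∀ i j, i ≠ j → Disjoint (E i) (E j))
    (hcov : (⋃ i, E i) = Set.univ)
    (hne : ∀ i, h i ≠ 0)
    (hinv : ∀ i, ∀ x : ℤ × ℤ, x + h i ∈ E i ↔ x ∈ E i)
    (hprop : ∀ i j, i ≠ j → ¬ Proportional (h i) (h j)) :
    ∀ i, IsPeriodicSet (E i) := by
  classical
  intro i
  have hpart : ∀ x, ∑ j, (E j).indicator (fun _ => (1:ℤ)) x = 1 := by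
    intro x
    have hx : x ∈ ⋃ i, E i := hcov ▸ Set.mem_univ x
    obtain ⟨k, hk⟩ := Set.mem_iUnion.1 hx
    rw [Finset.sum_eq_single k]
    · simp [hk]
    · intro j _ hjk
      exact Set.indicator_of_notMem (fun hj => Set.disjoint_left.1 (hdisj j k hjk) hj hk) _
    · simp
  have hfinv : ∀ j x, (E j).indicator (fun _ => (1:ℤ)) (x + h j)
      = (E j).indicator (fun _ => (1:ℤ)) x := by
    intro j x
    simp only [Set.indicator_apply, hinv]
  set d : Fin m → ℤ := fun j => (h i).1 * (h j).2 - (h i).2 * (h j).1 with hd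
  set s := Finset.univ.erase i with hs
  set L : ℤ := ∏ j ∈ s, d j with hL
  have hL0 : L ≠ 0 := Finset.prod_ne_zero_iff.2 fun j hj =>
    det_ne _ _ (hne i) (hne j) (hprop i j (Finset.ne_of_mem_erase hj).symm)
  set w : ℤ × ℤ := (-(L * (h i).2), L * (h i).1) with hw
  have hwc : ∀ j ∈ s, ∃ A B : ℤ, w = A • h j + B • h i := by
    intro j hj
    obtain ⟨c, hc⟩ : d j ∣ L := Finset.dvd_prod_of_mem d hj
    refine ⟨c * ((h i).1 ^ 2 + (h i).2 ^ 2), -(c * ((h i).1 * (h j).1 + (h i).2 * (h j).2)), ?_⟩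
    ext
    · simp [hw, hc, hd]; ring
    · simp [hw, hc, hd]; ring
  have hkill := kill (h i) w h s hwc ((E i).indicator (fun _ => (1:ℤ))) 1
    (fun j x => - (E j).indicator (fun _ => (1:ℤ)) x) (hfinv i)
    (fun j _ x => by rw [hfinv]) (by
      intro x
      have := hpart x
      rw [← Finset.add_sum_erase _ _ (Finset.mem_univ i)] at this
      rw [Finset.sum_neg_distrib]
      linarith)
  have hz := DD_collapse w _ ⟨1, fun x => by
    by_cases hx : x ∈ E i <;> simp [hx]⟩ _ hkill
  have hwE : ∀ x, x + w ∈ E i ↔ x ∈ E i := by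
    intro x
    have := congrFun hz x
    simp only [DD, Set.indicator_apply] at this
    by_cases h1 : x + w ∈ E i <;> by_cases h2 : x ∈ E i <;> simp_all
  let Λ : AddSubgroup (ℤ × ℤ) :=
    { carrier := {u | ∀ x, x + u ∈ E i ↔ x ∈ E i}
      zero_mem' := by intro x; simp
      add_mem' := by
        intro a b ha hb x
        rw [← add_assoc, hb, ha]
      neg_mem' := by
        intro a ha x
        rw [← ha (x + -a), neg_add_cancel_right] }
  have hhΛ : h i ∈ Λ := hinv i
  have hwΛ : w ∈ Λ := hwE
  refine ⟨Λ, fin_index Λ (L * ((h i).1 ^ 2 + (h i).2 ^ 2)) ?_ ?_ ?_, fun u hu => hu⟩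
  · refine mul_ne_zero hL0 fun h0 => hne i ?_
    ext
    · simp; nlinarith [sq_nonneg (h i).1, sq_nonneg (h i).2]
    · simp; nlinarith [sq_nonneg (h i).1, sq_nonneg (h i).2]
  · convert Λ.add_mem (Λ.zsmul_mem hhΛ (L * (h i).1)) (Λ.zsmul_mem hwΛ (-(h i).2)) using 1
    ext <;> simp [hw] <;> ring
  · convert Λ.add_mem (Λ.zsmul_mem hhΛ (L * (h i).2)) (Λ.zsmul_mem hwΛ ((h i).1)) using 1
    ext <;> simp [hw] <;> ring
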